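/- arXiv:2212.12009 — 6 statements merged into one kernel-verified Lean document; each statement's English description precedes it below -/
import Mathlib

section
/- Let Θ be a partially ordered set in which every pair of elements has an upper bound and a lower bound in Θ, let A be a set, and let u : A × Θ → ℝ have single-crossing differences (SCD). Then the choice correspondence C_u has interval choice: for every subset S ⊆ A and every a ∈ S, the set {θ ∈ Θ : a ∈ C_u(S, θ)} is an interval of Θ. -/
/-- A function `f : Θ → ℝ` is single crossing if `θ ↦ sgn (f θ)` is monotone
(increasing or decreasing). -/
def SingleCrossing {Θ : Type*} [PartialOrder Θ] (f : Θ → ℝ) : Prop :=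
  Monotone (fun θ => Real.sign (f θ)) ∨ Antitone (fun θ => Real.sign (f θ))

/-- Strictly single crossing: single crossing and no two ordered zeros. -/
def StrictSingleCrossing {Θ : Type*} [PartialOrder Θ] (f : Θ → ℝ) : Prop :=
  SingleCrossing f ∧ ∀ θ' θ'' : Θ, θ' < θ'' → ¬(f θ' = 0 ∧ f θ'' = 0)

/-- A subset of a partially ordered set is an interval. -/
def IsIntervalSet {Θ : Type*} [PartialOrder Θ] (S : Set Θ) : Prop :=
  ∀ θl θm θh : Θ, θl ∈ S → θh ∈ S → θl < θm → θm < θh → θm ∈ S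

/-- Single-crossing differences. -/
def SCD {A : Type*} {Θ : Type*} [PartialOrder Θ] (u : A → Θ → ℝ) : Prop :=
  ∀ a a' : A, SingleCrossing (fun θ => u a θ - u a' θ)

/-- Strict single-crossing differences. -/
def SSCD {A : Type*} {Θ : Type*} [PartialOrder Θ] (u : A → Θ → ℝ) : Prop :=
  ∀ a a' : A, a ≠ a' → StrictSingleCrossing (fun θ => u a θ - u a' θ)

/-- The choice correspondence `C_u(S, θ)`. -/
def choiceCorr {A : Type*} {Θ : Type*} (u : A → Θ → ℝ) (S : Set A) (θ : Θ) : Set A :=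
  {a ∈ S | ∀ b ∈ S, u b θ ≤ u a θ}

/-- `f₁` ratio dominates `f₂`: conditions (RD) and (RD+). -/
def RatioDominates {Θ : Type*} [PartialOrder Θ] (f₁ f₂ : Θ → ℝ) : Prop :=
  (∀ θl θh : Θ, θl < θh → f₁ θl * f₂ θh ≤ f₁ θh * f₂ θl) ∧
  (∀ θl θm θh : Θ, θl < θm → θm < θh →
    (f₁ θl * f₂ θh = f₁ θh * f₂ θl ↔
      (f₁ θl * f₂ θm = f₁ θm * f₂ θl ∧ f₁ θm * f₂ θh = f₁ θh * f₂ θm)))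

/-- `f₁` and `f₂` are ratio ordered. -/
def RatioOrdered {Θ : Type*} [PartialOrder Θ] (f₁ f₂ : Θ → ℝ) : Prop :=
  RatioDominates f₁ f₂ ∨ RatioDominates f₂ f₁

/-- `f₁` strictly ratio dominates `f₂`. -/
def StrictRatioDominates {Θ : Type*} [PartialOrder Θ] (f₁ f₂ : Θ → ℝ) : Prop :=
  ∀ θl θh : Θ, θl < θh → f₁ θl * f₂ θh < f₁ θh * f₂ θl

/-- `f₁` and `f₂` are strictly ratio ordered. -/
def StrictRatioOrdered {Θ : Type*} [PartialOrder Θ] (f₁ f₂ : Θ → ℝ) : Prop :=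
  StrictRatioDominates f₁ f₂ ∨ StrictRatioDominates f₂ f₁

/-- The environment `(A, Θ, u)` is convex. -/
def ConvexEnv {A : Type*} {Θ : Type*} (u : A → Θ → ℝ) : Prop :=
  ∀ a a' : A, ∀ lam : ℝ, 0 < lam → lam < 1 →
    ∃ a'' : A, ∀ θ : Θ, u a'' θ = lam * u a θ + (1 - lam) * u a' θ

/-- `A` is minimal with respect to `u`: no utility-indistinguishable pair. -/
def MinimalActions {A : Type*} {Θ : Type*} (u : A → Θ → ℝ) : Prop :=
  ∀ a a' : A, a ≠ a' → ∃ θ : Θ, u a θ ≠ u a' θ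

/-- `f : Z × Θ → ℝ` is linear combinations SC-preserving. -/
def LinCombSCPreserving {Z : Type*} {Θ : Type*} [PartialOrder Θ] (f : Z → Θ → ℝ) : Prop :=
  ∀ μ : Z → ℝ, (Function.support μ).Finite →
    SingleCrossing (fun θ => ∑ᶠ z, μ z * f z θ)

/-- `f : Z × Θ → ℝ` is linear combinations SSC-preserving. -/
def LinCombSSCPreserving {Z : Type*} {Θ : Type*} [PartialOrder Θ] (f : Z → Θ → ℝ) : Prop :=
  ∀ μ : Z → ℝ, (Function.support μ).Finite →
    ((∀ θ : Θ, (∑ᶠ z, μ z * f z θ) = 0) ∨ StrictSingleCrossing (fun θ => ∑ᶠ z, μ z * f z θ))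

/-- `f : Z × Θ → ℝ` is linear combinations monotonicity-preserving. -/
def LinCombMonPreserving {Z : Type*} {Θ : Type*} [PartialOrder Θ] (f : Z → Θ → ℝ) : Prop :=
  ∀ μ : Z → ℝ, (Function.support μ).Finite →
    (Monotone (fun θ => ∑ᶠ z, μ z * f z θ) ∨ Antitone (fun θ => ∑ᶠ z, μ z * f z θ))

/-- A finite-support lottery on `X`. -/
def IsLottery {X : Type*} (P : X → ℝ) : Prop :=
  (∀ x, 0 ≤ P x) ∧ (Function.support P).Finite ∧ (∑ᶠ x, P x) = 1

/-- Single-crossing expectational differences. -/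
def SCED {X : Type*} {Θ : Type*} [PartialOrder Θ] (v : X → Θ → ℝ) : Prop :=
  ∀ P Q : X → ℝ, IsLottery P → IsLottery Q →
    SingleCrossing (fun θ => (∑ᶠ x, P x * v x θ) - ∑ᶠ x, Q x * v x θ)

/-- If `u` has SCD, the choice correspondence `C_u` has interval choice. -/
theorem scd_implies_interval_choice {Θ A : Type*} [PartialOrder Θ]
    (hub : ∀ θ₁ θ₂ : Θ, ∃ θ : Θ, θ₁ ≤ θ ∧ θ₂ ≤ θ)
    (hlb : ∀ θ₁ θ₂ : Θ, ∃ θ : Θ, θ ≤ θ₁ ∧ θ ≤ θ₂)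
    (u : A → Θ → ℝ) (hscd : SCD u) :
    ∀ (S : Set A), ∀ a ∈ S, IsIntervalSet {θ : Θ | a ∈ choiceCorr u S θ} := by
  -- For each rival `b`, the sign of `u a - u b` at `θm` lies between its signs at `θl` and `θh`,
  -- both nonnegative.
  have key : ∀ x y : ℝ, 0 ≤ x → Real.sign x ≤ Real.sign y → 0 ≤ y := by
    intro x y hx hxy
    by_contra! hy
    rw [Real.sign_of_neg hy] at hxy
    rcases hx.eq_or_lt with rfl | hx
    · rw [Real.sign_zero] at hxy
      linarith
    · rw [Real.sign_of_pos hx] at hxy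
      linarith
  intro S a ha θl θm θh hl hh hlm hmh
  refine ⟨ha, fun b hb => sub_nonneg.1 ?_⟩
  rcases hscd a b with h | h
  · exact key _ _ (sub_nonneg.2 (hl.2 b hb)) (h hlm.le)
  · exact key _ _ (sub_nonneg.2 (hh.2 b hb)) (h hmh.le)
end

section
/- Let Θ be a partially ordered set with at least three elements in which every pair of elements has an upper bound and a lower bound in Θ, let A be a set, and let u : A × Θ → ℝ. Then u has strict single-crossing differences (SSCD) if and only if every selection from the choice correspondence C_u has interval choice, i.e., for every function s assigning to each pair (S, θ) with C_u(S,θ) ≠ ∅ an element s(S,θ) ∈ C_u(S,θ), and for every S ⊆ A and a ∈ S, the set {θ ∈ Θ : C_u(S,θ) ≠ ∅ and s(S,θ) = a} is an interval of Θ. -/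
/-- Along every three-chain, a weak sign shared by the two ends is strict at the middle. -/
def ChainCondition {Θ : Type*} [PartialOrder Θ] (f : Θ → ℝ) : Prop :=
  ∀ l m h : Θ, l < m → m < h →
    (0 ≤ f l → 0 ≤ f h → 0 < f m) ∧ (f l ≤ 0 → f h ≤ 0 → f m < 0)

theorem ChainCondition.neg {Θ : Type*} [PartialOrder Θ] {f : Θ → ℝ} (hf : ChainCondition f) :
    ChainCondition (fun θ => -f θ) := by
  intro l m h hlm hmh
  have := hf l m h hlm hmh
  constructor <;> intro h1 h2
  · have := this.2 (by linarith) (by linarith); linarith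
  · have := this.1 (by linarith) (by linarith); linarith

theorem StrictSingleCrossing.pos_of_nonneg {Θ : Type*} [PartialOrder Θ] {f : Θ → ℝ}
    (hf : StrictSingleCrossing f) {l m h : Θ} (hlm : l < m) (hmh : m < h)
    (hl : 0 ≤ f l) (hh : 0 ≤ f h) : 0 < f m := by
  obtain ⟨hs, hz⟩ := hf
  have z1 := hz l m hlm
  have z2 := hz m h hmh
  have key : (Real.sign (f l) ≤ Real.sign (f m) ∧ Real.sign (f m) ≤ Real.sign (f h)) ∨
      (Real.sign (f m) ≤ Real.sign (f l) ∧ Real.sign (f h) ≤ Real.sign (f m)) :=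
    hs.imp (fun k => ⟨k hlm.le, k hmh.le⟩) (fun k => ⟨k hlm.le, k hmh.le⟩)
  unfold Real.sign at key
  grind

/-- A strict decrease of the sign along `x < y` extends to all points below `x` and above `y`. -/
theorem ChainCondition.sign_lt_of_le {Θ : Type*} [PartialOrder Θ] {f : Θ → ℝ}
    (hf : ChainCondition f) {t x y v : Θ} (htx : t ≤ x) (hxy : x < y) (hyv : y ≤ v)
    (hs : Real.sign (f y) < Real.sign (f x)) : Real.sign (f v) < Real.sign (f t) := by
  have h1 : Real.sign (f x) ≤ Real.sign (f t) := by
    rcases htx.eq_or_lt with rfl | htx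
    · exact le_rfl
    · have := hf t x y htx hxy
      unfold Real.sign at *
      grind
  have h2 : Real.sign (f v) ≤ Real.sign (f y) := by
    rcases hyv.eq_or_lt with rfl | hyv
    · exact le_rfl
    · have := hf x y v hxy hyv
      unfold Real.sign at *
      grind
  linarith

theorem ChainCondition.singleCrossing {Θ : Type*} [PartialOrder Θ]
    (hub : ∀ θ₁ θ₂ : Θ, ∃ θ : Θ, θ₁ ≤ θ ∧ θ₂ ≤ θ)
    (hlb : ∀ θ₁ θ₂ : Θ, ∃ θ : Θ, θ ≤ θ₁ ∧ θ ≤ θ₂)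
    {f : Θ → ℝ} (hf : ChainCondition f) : SingleCrossing f := by
  by_contra hcon
  simp only [SingleCrossing, not_or, Monotone, Antitone, not_forall, not_le] at hcon
  obtain ⟨⟨x, y, hxy, h1⟩, z, w, hzw, h2⟩ := hcon
  have hxy' : x < y := hxy.lt_of_ne (by rintro rfl; exact lt_irrefl _ h1)
  have hzw' : z < w := hzw.lt_of_ne (by rintro rfl; exact lt_irrefl _ h2)
  obtain ⟨t, htx, htz⟩ := hlb x z
  obtain ⟨v, hyv, hwv⟩ := hub y w
  have k1 := hf.sign_lt_of_le htx hxy' hyv h1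
  have k2 := hf.neg.sign_lt_of_le htz hzw' hwv (by simpa [Real.sign_neg] using h2)
  simp only [Real.sign_neg] at k2
  linarith

theorem ChainCondition.strictSingleCrossing {Θ : Type*} [PartialOrder Θ]
    (hub : ∀ θ₁ θ₂ : Θ, ∃ θ : Θ, θ₁ ≤ θ ∧ θ₂ ≤ θ)
    (hlb : ∀ θ₁ θ₂ : Θ, ∃ θ : Θ, θ ≤ θ₁ ∧ θ ≤ θ₂)
    (hthree : ∃ θ₁ θ₂ θ₃ : Θ, θ₁ ≠ θ₂ ∧ θ₁ ≠ θ₃ ∧ θ₂ ≠ θ₃)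
    {f : Θ → ℝ} (hf : ChainCondition f) : StrictSingleCrossing f := by
  refine ⟨hf.singleCrossing hub hlb, ?_⟩
  rintro p q hpq ⟨hp, hq⟩
  have above : ∀ c, ¬ q < c := fun c hc => by
    have := hf p q c hpq hc
    grind
  have below : ∀ c, ¬ c < p := fun c hc => by
    have := hf c p q hc hpq
    grind
  have between : ∀ c, p < c → ¬ c < q := fun c h1 h2 => by
    have := hf p c q h1 h2
    grind
  have top : ∀ c, c ≤ q := fun c => by
    obtain ⟨d, hd1, hd2⟩ := hub c q
    rcases hd2.eq_or_lt with rfl | hd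
    · exact hd1
    · exact absurd hd (above d)
  have bot : ∀ c, p ≤ c := fun c => by
    obtain ⟨d, hd1, hd2⟩ := hlb c p
    rcases hd2.eq_or_lt with rfl | hd
    · exact hd1
    · exact absurd hd (below d)
  have only : ∀ c, c = p ∨ c = q := fun c => by
    rcases (bot c).eq_or_lt with h | h
    · exact Or.inl h.symm
    · rcases (top c).eq_or_lt with h' | h'
      · exact Or.inr h'
      · exact absurd h' (between c h)
  obtain ⟨x, y, z, hxy, hxz, hyz⟩ := hthree
  have hx := only x
  have hy := only y
  have hz := only z
  grind

open Classical in
/-- Interval choice for all selections forces the middle comparison in any three-chain: otherwise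
a selection could pick `a`, `b`, `a` from `{a, b}` along the chain. -/
theorem lt_of_interval_choice {Θ A : Type*} [PartialOrder Θ] (u : A → Θ → ℝ)
    (H : ∀ s : Set A → Θ → A,
        (∀ (S : Set A) (θ : Θ), (choiceCorr u S θ).Nonempty → s S θ ∈ choiceCorr u S θ) →
        ∀ (S : Set A), ∀ a ∈ S,
          IsIntervalSet {θ : Θ | (choiceCorr u S θ).Nonempty ∧ s S θ = a})
    {a b : A} (hab : a ≠ b) {l m h : Θ} (hlm : l < m) (hmh : m < h)
    (hl : u b l ≤ u a l) (hh : u b h ≤ u a h) : u b m < u a m := by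
  by_contra hm
  rw [not_lt] at hm
  have cl : a ∈ choiceCorr u {a, b} l := by simp [choiceCorr, hl]
  have ch : a ∈ choiceCorr u {a, b} h := by simp [choiceCorr, hh]
  have cm : b ∈ choiceCorr u {a, b} m := by simp [choiceCorr, hm]
  let s : Set A → Θ → A := fun S θ =>
    if a ∈ choiceCorr u S θ ∧ θ ≠ m then a
    else if b ∈ choiceCorr u S θ ∧ θ = m then b
    else if hne : (choiceCorr u S θ).Nonempty then hne.some else a
  have hs : ∀ (S : Set A) (θ : Θ), (choiceCorr u S θ).Nonempty →
      s S θ ∈ choiceCorr u S θ := by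
    intro S θ hne
    simp only [s]
    split_ifs with h1 h2
    · exact h1.1
    · exact h2.1
    · exact hne.some_mem
  have sl : s {a, b} l = a := if_pos ⟨cl, hlm.ne⟩
  have sh : s {a, b} h = a := if_pos ⟨ch, hmh.ne'⟩
  have sm : s {a, b} m = b := by simp [s, cm]
  have := H s hs {a, b} a (by simp) l m h ⟨⟨a, cl⟩, sl⟩ ⟨⟨a, ch⟩, sh⟩ hlm hmh
  exact hab (this.2.symm.trans sm)

/-- With `|Θ| ≥ 3`, `u` has SSCD iff every selection from `C_u`
has interval choice. -/
theorem sscd_iff_selection_interval_choice {Θ A : Type*} [PartialOrder Θ]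
    (hub : ∀ θ₁ θ₂ : Θ, ∃ θ : Θ, θ₁ ≤ θ ∧ θ₂ ≤ θ)
    (hlb : ∀ θ₁ θ₂ : Θ, ∃ θ : Θ, θ ≤ θ₁ ∧ θ ≤ θ₂)
    (hthree : ∃ θ₁ θ₂ θ₃ : Θ, θ₁ ≠ θ₂ ∧ θ₁ ≠ θ₃ ∧ θ₂ ≠ θ₃)
    (u : A → Θ → ℝ) :
    SSCD u ↔
      ∀ s : Set A → Θ → A,
        (∀ (S : Set A) (θ : Θ), (choiceCorr u S θ).Nonempty → s S θ ∈ choiceCorr u S θ) →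
        ∀ (S : Set A), ∀ a ∈ S,
          IsIntervalSet {θ : Θ | (choiceCorr u S θ).Nonempty ∧ s S θ = a} := by
  constructor
  · rintro hu s hs S a haS l m h ⟨hnl, hsl⟩ ⟨hnh, hsh⟩ hlm hmh
    have cl := hs S l hnl
    have ch := hs S h hnh
    rw [hsl] at cl
    rw [hsh] at ch
    have strict : ∀ b ∈ S, b ≠ a → u b m < u a m := fun b hb hba =>
      sub_pos.1 ((hu a b hba.symm).pos_of_nonneg hlm hmh
        (sub_nonneg.2 (cl.2 b hb)) (sub_nonneg.2 (ch.2 b hb)))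
    have cm : a ∈ choiceCorr u S m := by
      refine ⟨haS, fun b hb => ?_⟩
      by_cases hba : b = a
      · rw [hba]
      · exact (strict b hb hba).le
    refine ⟨⟨a, cm⟩, ?_⟩
    by_contra hne
    have csm := hs S m ⟨a, cm⟩
    exact absurd (csm.2 a haS) (not_le.2 (strict _ csm.1 hne))
  · intro H a b hab
    refine ChainCondition.strictSingleCrossing hub hlb hthree fun l m h hlm hmh => ⟨?_, ?_⟩
    · intro hl hh
      exact sub_pos.2 (lt_of_interval_choice u H hab hlm hmh (sub_nonneg.1 hl) (sub_nonneg.1 hh))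
    · intro hl hh
      exact sub_neg.2
        (lt_of_interval_choice u H hab.symm hlm hmh (sub_nonpos.1 hl) (sub_nonpos.1 hh))
end

section
/- Let Θ be a partially ordered set in which every pair of elements has an upper bound and a lower bound in Θ, and let f : Θ → ℝ. Then f is not single crossing if and only if there exist θ_l < θ_m < θ_h in Θ such that either (sgn(f(θ_l)) < sgn(f(θ_m)) and sgn(f(θ_m)) > sgn(f(θ_h))), or (sgn(f(θ_l)) > sgn(f(θ_m)) and sgn(f(θ_m)) < sgn(f(θ_h))). -/
/-- `f` is not single crossing iff there is a sign reversal
around some middle type. -/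
theorem not_singleCrossing_iff_sign_reversal {Θ : Type*} [PartialOrder Θ]
    (hub : ∀ θ₁ θ₂ : Θ, ∃ θ : Θ, θ₁ ≤ θ ∧ θ₂ ≤ θ)
    (hlb : ∀ θ₁ θ₂ : Θ, ∃ θ : Θ, θ ≤ θ₁ ∧ θ ≤ θ₂)
    (f : Θ → ℝ) :
    ¬ SingleCrossing f ↔
      ∃ θl θm θh : Θ, θl < θm ∧ θm < θh ∧
        ((Real.sign (f θl) < Real.sign (f θm) ∧ Real.sign (f θh) < Real.sign (f θm)) ∨
         (Real.sign (f θm) < Real.sign (f θl) ∧ Real.sign (f θm) < Real.sign (f θh))) := by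
  constructor
  · intro h
    by_contra hno
    push Not at hno
    simp only [SingleCrossing, Monotone, Antitone, not_or, not_forall, not_le] at h
    obtain ⟨⟨a, b, hab, hdec⟩, ⟨c, d, hcd, hinc⟩⟩ := h
    have hab' : a < b := lt_of_le_of_ne hab (by rintro rfl; exact lt_irrefl _ hdec)
    have hcd' : c < d := lt_of_le_of_ne hcd (by rintro rfl; exact lt_irrefl _ hinc)
    obtain ⟨l, hla, hlc⟩ := hlb a c
    obtain ⟨h, hbh, hdh⟩ := hub b d
    -- Without a reversal, the strict changes on `a < b` and `c < d` persist on `l < h`.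
    have h1 : Real.sign (f a) ≤ Real.sign (f l) := by
      rcases hla.eq_or_lt with rfl | hlt
      · exact le_rfl
      · by_contra! hs
        exact absurd ((hno l a b hlt hab').1 hs) (not_le.mpr hdec)
    have h2 : Real.sign (f h) ≤ Real.sign (f b) := by
      rcases hbh.eq_or_lt with rfl | hlt
      · exact le_rfl
      · exact (hno a b h hab' hlt).2 hdec
    have h3 : Real.sign (f l) ≤ Real.sign (f c) := by
      rcases hlc.eq_or_lt with rfl | hlt
      · exact le_rfl
      · by_contra! hs
        exact absurd ((hno l c d hlt hcd').2 hs) (not_le.mpr hinc)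
    have h4 : Real.sign (f d) ≤ Real.sign (f h) := by
      rcases hdh.eq_or_lt with rfl | hlt
      · exact le_rfl
      · exact (hno c d h hcd' hlt).1 hinc
    linarith
  · rintro ⟨l, m, h, hlm, hmh, hrev⟩ (hmon | hanti)
    · have h1 := hmon hlm.le
      have h2 := hmon hmh.le
      dsimp only at h1 h2
      rcases hrev with hr | hr <;> linarith [hr.1, hr.2]
    · have h1 := hanti hlm.le
      have h2 := hanti hmh.le
      dsimp only at h1 h2
      rcases hrev with hr | hr <;> linarith [hr.1, hr.2]
end

section
/- Let Θ be a partially ordered set in which every pair of elements has an upper bound and a lower bound in Θ, and let f₁, f₂ : Θ → ℝ. Then the linear combination θ ↦ α₁·f₁(θ) + α₂·f₂(θ) is single crossing for every (α₁, α₂) ∈ ℝ² if and only if f₁ and f₂ are each single crossing and ratio ordered. -/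
lemma sign_lt_sign_iff {x y : ℝ} :
    Real.sign x < Real.sign y ↔ (x < 0 ∧ 0 ≤ y) ∨ (x ≤ 0 ∧ 0 < y) := by
  unfold Real.sign
  grind

lemma SingleCrossing.no_peak {Θ : Type*} [PartialOrder Θ] {f : Θ → ℝ} (hf : SingleCrossing f)
    {l m h : Θ} (hlm : l ≤ m) (hmh : m ≤ h) :
    ¬ (Real.sign (f l) < Real.sign (f m) ∧ Real.sign (f h) < Real.sign (f m)) := by
  rintro ⟨h1, h2⟩
  rcases hf with hf | hf
  · exact absurd (hf hmh) h2.not_ge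
  · exact absurd (hf hlm) h1.not_ge

lemma SingleCrossing.no_valley {Θ : Type*} [PartialOrder Θ] {f : Θ → ℝ} (hf : SingleCrossing f)
    {l m h : Θ} (hlm : l ≤ m) (hmh : m ≤ h) :
    ¬ (Real.sign (f m) < Real.sign (f l) ∧ Real.sign (f m) < Real.sign (f h)) := by
  rintro ⟨h1, h2⟩
  rcases hf with hf | hf
  · exact absurd (hf hlm) h1.not_ge
  · exact absurd (hf hmh) h2.not_ge

/-- With upper and lower bounds available, single crossing can be tested on three-point chains:
a descent `a ≤ b` and an ascent `c ≤ d` of the sign both lie between a common lower bound and a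
common upper bound, whose signs they compare in opposite ways. -/
lemma singleCrossing_of_no_peak {Θ : Type*} [PartialOrder Θ]
    (hub : ∀ θ₁ θ₂ : Θ, ∃ θ : Θ, θ₁ ≤ θ ∧ θ₂ ≤ θ)
    (hlb : ∀ θ₁ θ₂ : Θ, ∃ θ : Θ, θ ≤ θ₁ ∧ θ ≤ θ₂) {f : Θ → ℝ}
    (hp : ∀ l m h : Θ, l ≤ m → m ≤ h →
      ¬ (Real.sign (f l) < Real.sign (f m) ∧ Real.sign (f h) < Real.sign (f m)))
    (hv : ∀ l m h : Θ, l ≤ m → m ≤ h →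
      ¬ (Real.sign (f m) < Real.sign (f l) ∧ Real.sign (f m) < Real.sign (f h))) :
    SingleCrossing f := by
  by_contra hf
  simp only [SingleCrossing, not_or, Monotone, Antitone, not_forall, not_le] at hf
  obtain ⟨⟨a, b, hab, h1⟩, ⟨c, d, hcd, h2⟩⟩ := hf
  obtain ⟨l, hla, hlc⟩ := hlb a c
  obtain ⟨h, hbh, hdh⟩ := hub b d
  have e1 := hp l a b hla hab
  have e2 := hv a b h hab hbh
  have e3 := hv l c d hlc hcd
  have e4 := hp c d h hcd hdh
  grind

lemma no_peak_of_ratioDominates {Θ : Type*} [PartialOrder Θ] {f₁ f₂ : Θ → ℝ}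
    (h₁ : SingleCrossing f₁) (h₂ : SingleCrossing f₂) (hrd : RatioDominates f₁ f₂) (α₁ α₂ : ℝ)
    {l m h : Θ} (hlm : l ≤ m) (hmh : m ≤ h) :
    ¬ (Real.sign (α₁ * f₁ l + α₂ * f₂ l) < Real.sign (α₁ * f₁ m + α₂ * f₂ m) ∧
      Real.sign (α₁ * f₁ h + α₂ * f₂ h) < Real.sign (α₁ * f₁ m + α₂ * f₂ m)) := by
  rintro ⟨s1, s2⟩
  have hlm' : l < m := lt_of_le_of_ne hlm (by rintro rfl; exact s1.false)
  have hmh' : m < h := lt_of_le_of_ne hmh (by rintro rfl; exact s2.false)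
  obtain ⟨hr, hrp⟩ := hrd
  have r1 := hr l m hlm'
  have r2 := hr m h hmh'
  have r3 := hr l h (hlm'.trans hmh')
  have r4 := hrp l m h hlm' hmh'
  have p1 := h₁.no_peak hlm hmh
  have p2 := h₂.no_peak hlm hmh
  have v1 := h₁.no_valley hlm hmh
  have v2 := h₂.no_valley hlm hmh
  have key : (α₁ * f₁ m + α₂ * f₂ m) * (f₁ h * f₂ l - f₁ l * f₂ h) =
      (α₁ * f₁ l + α₂ * f₂ l) * (f₁ h * f₂ m - f₁ m * f₂ h) +
      (α₁ * f₁ h + α₂ * f₂ h) * (f₁ m * f₂ l - f₁ l * f₂ m) := by ring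
  -- At a peak the two sides of `key` have opposite weak signs, so all its terms vanish.
  have col : f₁ l * f₂ h = f₁ h * f₂ l ∧ f₁ l * f₂ m = f₁ m * f₂ l ∧
      f₁ m * f₂ h = f₁ h * f₂ m := by
    rw [sign_lt_sign_iff] at s1 s2
    generalize hgl : α₁ * f₁ l + α₂ * f₂ l = gl at *
    generalize hgm : α₁ * f₁ m + α₂ * f₂ m = gm at *
    generalize hgh : α₁ * f₁ h + α₂ * f₂ h = gh at *
    have gl0 : gl ≤ 0 := by grind
    have gh0 : gh ≤ 0 := by grind
    have gm0 : 0 ≤ gm := by grind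
    have t1 := mul_nonneg (neg_nonneg.2 gl0) (sub_nonneg.2 r2)
    have t2 := mul_nonneg (neg_nonneg.2 gh0) (sub_nonneg.2 r1)
    have t3 := mul_nonneg gm0 (sub_nonneg.2 r3)
    rcases gm0.lt_or_eq with hm | hm
    · have z : gm * (f₁ h * f₂ l - f₁ l * f₂ h) = 0 := by linarith
      have z' : f₁ l * f₂ h = f₁ h * f₂ l := by
        have := (mul_eq_zero.1 z).resolve_left hm.ne'
        linarith
      exact ⟨z', r4.1 z'⟩
    · have hl : gl < 0 := by grind
      have hh : gh < 0 := by grind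
      have z1 : gl * (f₁ h * f₂ m - f₁ m * f₂ h) = 0 := by linarith
      have z2 : gh * (f₁ m * f₂ l - f₁ l * f₂ m) = 0 := by linarith
      have w1 := (mul_eq_zero.1 z1).resolve_left hl.ne
      have w2 := (mul_eq_zero.1 z2).resolve_left hh.ne
      have w : f₁ l * f₂ m = f₁ m * f₂ l ∧ f₁ m * f₂ h = f₁ h * f₂ m :=
        ⟨by linarith, by linarith⟩
      exact ⟨r4.2 w, w⟩
  obtain ⟨c1, c2, c3⟩ := col
  -- Collinearity makes each `fᵢ` proportional to `g = α₁ f₁ + α₂ f₂` on the chain.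
  have a1 : (α₁ * f₁ m + α₂ * f₂ m) * f₁ l = (α₁ * f₁ l + α₂ * f₂ l) * f₁ m := by
    linear_combination α₂ * c2
  have a2 : (α₁ * f₁ m + α₂ * f₂ m) * f₂ l = (α₁ * f₁ l + α₂ * f₂ l) * f₂ m := by
    linear_combination -α₁ * c2
  have b1 : (α₁ * f₁ m + α₂ * f₂ m) * f₁ h = (α₁ * f₁ h + α₂ * f₂ h) * f₁ m := by
    linear_combination -α₂ * c3
  have b2 : (α₁ * f₁ m + α₂ * f₂ m) * f₂ h = (α₁ * f₁ h + α₂ * f₂ h) * f₂ m := by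
    linear_combination α₁ * c3
  have d1 : (α₁ * f₁ h + α₂ * f₂ h) * f₁ l = (α₁ * f₁ l + α₂ * f₂ l) * f₁ h := by
    linear_combination α₂ * c1
  have d2 : (α₁ * f₁ h + α₂ * f₂ h) * f₂ l = (α₁ * f₁ l + α₂ * f₂ l) * f₂ h := by
    linear_combination -α₁ * c1
  -- Here `x, y, z` are the values of one `fᵢ` at `l, m, h`. Being proportional to `g` without
  -- a peak or valley, it vanishes at `m` if `g m ≠ 0`, and at `l` otherwise.
  have main : ∀ gl gm gh x y z : ℝ, Real.sign gl < Real.sign gm → Real.sign gh < Real.sign gm →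
      gm * x = gl * y → gm * z = gh * y → gh * x = gl * z →
      ¬ (Real.sign x < Real.sign y ∧ Real.sign z < Real.sign y) →
      ¬ (Real.sign y < Real.sign x ∧ Real.sign y < Real.sign z) →
      (gm = 0 → x = 0) ∧ (gm ≠ 0 → y = 0) := by
    intro gl gm gh x y z s1 s2 hx hz hxz hp hv
    simp only [sign_lt_sign_iff] at s1 s2 hp hv
    have gl0 : gl ≤ 0 := by grind
    have gh0 : gh ≤ 0 := by grind
    have gm0 : 0 ≤ gm := by grind
    constructor
    · intro hm
      have hl : gl < 0 := by grind
      have hh : gh < 0 := by grind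
      have hy : y = 0 := by
        rw [hm, zero_mul] at hx
        exact (mul_eq_zero.1 hx.symm).resolve_left hl.ne
      by_contra hx0
      rcases lt_or_gt_of_ne hx0 with h0 | h0
      · have : z < 0 := by
          by_contra! hc
          nlinarith [mul_pos_of_neg_of_neg hh h0, mul_nonneg (neg_nonneg.2 gl0) hc]
        grind
      · have : 0 < z := by
          by_contra! hc
          nlinarith [mul_neg_of_neg_of_pos hh h0, mul_nonneg_of_nonpos_of_nonpos gl0 hc]
        grind
    · intro hm
      have hm' : 0 < gm := lt_of_le_of_ne gm0 (Ne.symm hm)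
      by_contra hy
      rcases lt_or_gt_of_ne hy with h0 | h0
      · have e1 : 0 ≤ x := by
          by_contra! hc
          nlinarith [mul_neg_of_pos_of_neg hm' hc, mul_nonneg_of_nonpos_of_nonpos gl0 h0.le]
        have e2 : 0 ≤ z := by
          by_contra! hc
          nlinarith [mul_neg_of_pos_of_neg hm' hc, mul_nonneg_of_nonpos_of_nonpos gh0 h0.le]
        grind
      · have e1 : x ≤ 0 := by
          by_contra! hc
          nlinarith [mul_pos hm' hc, mul_nonneg (neg_nonneg.2 gl0) h0.le]
        have e2 : z ≤ 0 := by
          by_contra! hc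
          nlinarith [mul_pos hm' hc, mul_nonneg (neg_nonneg.2 gh0) h0.le]
        grind
  have m1 := main _ _ _ _ _ _ s1 s2 a1 b1 d1 p1 v1
  have m2 := main _ _ _ _ _ _ s1 s2 a2 b2 d2 p2 v2
  by_cases hm : α₁ * f₁ m + α₂ * f₂ m = 0
  · have : α₁ * f₁ l + α₂ * f₂ l = 0 := by rw [m1.1 hm, m2.1 hm]; ring
    rw [this, hm] at s1
    exact s1.false
  · exact hm (by rw [m1.2 hm, m2.2 hm]; ring)

lemma singleCrossing_of_ratioDominates {Θ : Type*} [PartialOrder Θ]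
    (hub : ∀ θ₁ θ₂ : Θ, ∃ θ : Θ, θ₁ ≤ θ ∧ θ₂ ≤ θ)
    (hlb : ∀ θ₁ θ₂ : Θ, ∃ θ : Θ, θ ≤ θ₁ ∧ θ ≤ θ₂) {f₁ f₂ : Θ → ℝ}
    (h₁ : SingleCrossing f₁) (h₂ : SingleCrossing f₂) (hrd : RatioDominates f₁ f₂) (α₁ α₂ : ℝ) :
    SingleCrossing (fun θ => α₁ * f₁ θ + α₂ * f₂ θ) := by
  refine singleCrossing_of_no_peak hub hlb
    (fun l m h hlm hmh => no_peak_of_ratioDominates h₁ h₂ hrd α₁ α₂ hlm hmh) ?_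
  -- A valley of the combination is a peak of its negative.
  intro l m h hlm hmh
  have := no_peak_of_ratioDominates h₁ h₂ hrd (-α₁) (-α₂) hlm hmh
  have e : ∀ θ, -α₁ * f₁ θ + -α₂ * f₂ θ = -(α₁ * f₁ θ + α₂ * f₂ θ) := fun θ => by ring
  simpa only [e, Real.sign_neg, neg_lt_neg_iff] using this

/-- Positivity of the cross product at `a < b` propagates outwards: both `D a ·` and `D · h` are
linear combinations of `f₁` and `f₂` vanishing at one point and positive at a comparable one,
which fixes the direction in which their signs are monotone. -/
lemma cross_pos_extend {Θ : Type*} [PartialOrder Θ] {f₁ f₂ : Θ → ℝ}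
    (H : ∀ α₁ α₂ : ℝ, SingleCrossing (fun θ => α₁ * f₁ θ + α₂ * f₂ θ))
    {a b l h : Θ} (hab : a ≤ b) (hla : l ≤ a) (hbh : b ≤ h)
    (hD : f₁ a * f₂ b < f₁ b * f₂ a) : f₁ l * f₂ h < f₁ h * f₂ l := by
  have step1 : f₁ a * f₂ h < f₁ h * f₂ a := by
    have := (H (f₂ a) (-f₁ a)).no_peak hab hbh
    simp only [sign_lt_sign_iff] at this
    by_contra! hc
    exact this ⟨Or.inr ⟨by linarith, by linarith⟩, Or.inr ⟨by linarith, by linarith⟩⟩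
  have := (H (-f₂ h) (f₁ h)).no_peak hla (hab.trans hbh)
  simp only [sign_lt_sign_iff] at this
  by_contra! hc
  exact this ⟨Or.inr ⟨by linarith, by linarith⟩, Or.inr ⟨by linarith, by linarith⟩⟩

lemma cross_eq_zero_iff {Θ : Type*} [PartialOrder Θ] {f₁ f₂ : Θ → ℝ}
    (H : ∀ α₁ α₂ : ℝ, SingleCrossing (fun θ => α₁ * f₁ θ + α₂ * f₂ θ))
    {l m h : Θ} (hlm : l ≤ m) (hmh : m ≤ h) :
    f₁ l * f₂ h = f₁ h * f₂ l ↔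
      (f₁ l * f₂ m = f₁ m * f₂ l ∧ f₁ m * f₂ h = f₁ h * f₂ m) := by
  -- A combination vanishing at both ends of a chain vanishes in the middle.
  have Z : ∀ α₁ α₂ : ℝ, α₁ * f₁ l + α₂ * f₂ l = 0 → α₁ * f₁ h + α₂ * f₂ h = 0 →
      α₁ * f₁ m + α₂ * f₂ m = 0 := by
    intro α₁ α₂ hl hh
    have p := (H α₁ α₂).no_peak hlm hmh
    have v := (H α₁ α₂).no_valley hlm hmh
    simp only [sign_lt_sign_iff, hl, hh] at p v
    grind
  constructor
  · intro hD
    have z1 := Z (f₂ l) (-f₁ l) (by ring) (by linarith)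
    have z2 := Z (f₂ h) (-f₁ h) (by linarith) (by ring)
    exact ⟨by linarith, by linarith⟩
  · rintro ⟨c1, c2⟩
    by_contra hD
    -- The vectors at `l` and `h` are independent, so the vector at `m` is zero.
    have hD' : f₁ h * f₂ l - f₁ l * f₂ h ≠ 0 := fun hc => hD (by linarith)
    have m1 : f₁ m = 0 := by
      have : f₁ m * (f₁ h * f₂ l - f₁ l * f₂ h) = 0 := by
        linear_combination -f₁ h * c1 - f₁ l * c2
      exact (mul_eq_zero.1 this).resolve_right hD'
    have m2 : f₂ m = 0 := by
      have : f₂ m * (f₁ h * f₂ l - f₁ l * f₂ h) = 0 := by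
        linear_combination -f₂ h * c1 - f₂ l * c2
      exact (mul_eq_zero.1 this).resolve_right hD'
    set D := f₁ h * f₂ l - f₁ l * f₂ h with hDdef
    -- Up to the factor `D ^ 2`, this is the combination equal to `1` at both `l` and `h`;
    -- at both points it takes the value `D ^ 2`.
    have v := (H (D * (f₂ l - f₂ h)) (D * (f₁ h - f₁ l))).no_valley hlm hmh
    simp only [sign_lt_sign_iff] at v
    have e0 : D * (f₂ l - f₂ h) * f₁ m + D * (f₁ h - f₁ l) * f₂ m = 0 := by
      rw [m1, m2]; ring
    have e1 : D * (f₂ l - f₂ h) * f₁ l + D * (f₁ h - f₁ l) * f₂ l = D ^ 2 := by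
      rw [hDdef]; ring
    have e2 : D * (f₂ l - f₂ h) * f₁ h + D * (f₁ h - f₁ l) * f₂ h = D ^ 2 := by
      rw [hDdef]; ring
    rw [e0, e1, e2] at v
    have : 0 < D ^ 2 := by positivity
    exact v ⟨Or.inr ⟨le_rfl, this⟩, Or.inr ⟨le_rfl, this⟩⟩

/-- All linear combinations of `f₁, f₂` are single crossing iff
`f₁` and `f₂` are each single crossing and ratio ordered. -/
theorem linComb_singleCrossing_iff_ratioOrdered {Θ : Type*} [PartialOrder Θ]
    (hub : ∀ θ₁ θ₂ : Θ, ∃ θ : Θ, θ₁ ≤ θ ∧ θ₂ ≤ θ)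
    (hlb : ∀ θ₁ θ₂ : Θ, ∃ θ : Θ, θ ≤ θ₁ ∧ θ ≤ θ₂)
    (f₁ f₂ : Θ → ℝ) :
    (∀ α₁ α₂ : ℝ, SingleCrossing (fun θ => α₁ * f₁ θ + α₂ * f₂ θ)) ↔
      (SingleCrossing f₁ ∧ SingleCrossing f₂ ∧ RatioOrdered f₁ f₂) := by
  constructor
  · intro H
    refine ⟨by simpa using H 1 0, by simpa using H 0 1, ?_⟩
    by_cases hc : ∀ θl θh : Θ, θl < θh → f₁ θl * f₂ θh ≤ f₁ θh * f₂ θl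
    · exact Or.inl ⟨hc, fun l m h hlm hmh => cross_eq_zero_iff H hlm.le hmh.le⟩
    · push Not at hc
      obtain ⟨a, b, hab, hD⟩ := hc
      have H' : ∀ α₁ α₂ : ℝ, SingleCrossing (fun θ => α₁ * f₂ θ + α₂ * f₁ θ) := fun α₁ α₂ => by
        simpa only [add_comm] using H α₂ α₁
      refine Or.inr ⟨fun c d hcd => ?_, fun l m h hlm hmh => cross_eq_zero_iff H' hlm.le hmh.le⟩
      by_contra! hE
      obtain ⟨l, hla, hlc⟩ := hlb a c
      obtain ⟨h, hbh, hdh⟩ := hub b d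
      have e1 := cross_pos_extend H hcd.le hlc hdh (by linarith)
      have e2 := cross_pos_extend H' hab.le hla hbh (by linarith)
      linarith
  · rintro ⟨h₁, h₂, hrd | hrd⟩ α₁ α₂
    · exact singleCrossing_of_ratioDominates hub hlb h₁ h₂ hrd α₁ α₂
    · simpa only [add_comm] using singleCrossing_of_ratioDominates hub hlb h₂ h₁ hrd α₂ α₁
end

section
/- Let Θ be a partially ordered set in which every pair of elements has an upper bound and a lower bound in Θ, let A be a set, and let u : A × Θ → ℝ be such that the environment (A, Θ, u) is convex. Then u has single-crossing differences (SCD) if and only if there exist functions g₁, g₂ : A → ℝ and f₁, f₂, h : Θ → ℝ such that f₁ and f₂ are each single crossing and ratio ordered, and for all a ∈ A and θ ∈ Θ, u(a, θ) = g₁(a)·f₁(θ) + g₂(a)·f₂(θ) + h(θ). -/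
/-! ### Single crossing along chains -/

/-- The sign of `y` lies between the signs of `x` and `z`. -/
def Betw (x y z : ℝ) : Prop :=
  (0 < y → 0 < x ∨ 0 < z) ∧ (y < 0 → x < 0 ∨ z < 0) ∧
    (y = 0 → ¬(0 < x ∧ 0 < z) ∧ ¬(x < 0 ∧ z < 0))

lemma Betw.of_sign {x y z : ℝ}
    (h : (Real.sign x ≤ Real.sign y ∧ Real.sign y ≤ Real.sign z) ∨
      (Real.sign y ≤ Real.sign x ∧ Real.sign z ≤ Real.sign y)) : Betw x y z := by
  unfold Betw
  rcases lt_trichotomy x 0 with hx | hx | hx <;> rcases lt_trichotomy y 0 with hy | hy | hy <;>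
    rcases lt_trichotomy z 0 with hz | hz | hz <;>
    simp [hx, hy, hz, Real.sign_of_neg, Real.sign_of_pos, hx.not_gt, hy.not_gt, hz.not_gt] at h ⊢ <;>
    first | exact hy.ne | exact hy.ne' | norm_num at h

lemma Betw.sign {x y z : ℝ} (h : Betw x y z) :
    (Real.sign x ≤ Real.sign y ∧ Real.sign y ≤ Real.sign z) ∨
      (Real.sign y ≤ Real.sign x ∧ Real.sign z ≤ Real.sign y) := by
  unfold Betw at h
  rcases lt_trichotomy x 0 with hx | hx | hx <;> rcases lt_trichotomy y 0 with hy | hy | hy <;>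
    rcases lt_trichotomy z 0 with hz | hz | hz <;>
    simp [hx, hy, hz, Real.sign_of_neg, Real.sign_of_pos, hx.not_gt, hy.not_gt, hz.not_gt] at h ⊢

section

variable {Θ : Type*} [PartialOrder Θ]

lemma SingleCrossing.betw {F : Θ → ℝ} (hF : SingleCrossing F) {l m h : Θ} (hlm : l ≤ m)
    (hmh : m ≤ h) : Betw (F l) (F m) (F h) :=
  Betw.of_sign (hF.imp (fun H => ⟨H hlm, H hmh⟩) (fun H => ⟨H hlm, H hmh⟩))

lemma singleCrossing_of_betw
    (hub : ∀ θ₁ θ₂ : Θ, ∃ θ : Θ, θ₁ ≤ θ ∧ θ₂ ≤ θ)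
    (hlb : ∀ θ₁ θ₂ : Θ, ∃ θ : Θ, θ ≤ θ₁ ∧ θ ≤ θ₂) {F : Θ → ℝ}
    (hF : ∀ l m h : Θ, l ≤ m → m ≤ h → Betw (F l) (F m) (F h)) : SingleCrossing F := by
  by_contra hcon
  unfold SingleCrossing Monotone Antitone at hcon
  push Not at hcon
  obtain ⟨⟨l, h, hlh, h1⟩, l', h', hlh', h2⟩ := hcon
  obtain ⟨L, hL, hL'⟩ := hlb l l'
  obtain ⟨H, hH, hH'⟩ := hub h h'
  have a1 := (hF L l h hL hlh).sign
  have a2 := (hF L h H (hL.trans hlh) hH).sign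
  have a3 := (hF L l' h' hL' hlh').sign
  have a4 := (hF L h' H (hL'.trans hlh') hH').sign
  grind

/-! ### Combinations of ratio-ordered functions -/

/-- Single crossing passes to linear combinations of ratio-ordered functions. -/
lemma singleCrossing_comb
    (hub : ∀ θ₁ θ₂ : Θ, ∃ θ : Θ, θ₁ ≤ θ ∧ θ₂ ≤ θ)
    (hlb : ∀ θ₁ θ₂ : Θ, ∃ θ : Θ, θ ≤ θ₁ ∧ θ ≤ θ₂) {f₁ f₂ : Θ → ℝ}
    (h₁ : SingleCrossing f₁) (h₂ : SingleCrossing f₂) (hr : RatioDominates f₁ f₂) (α β : ℝ) :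
    SingleCrossing (fun θ => α * f₁ θ + β * f₂ θ) := by
  -- It is enough to exclude the patterns in which `F m` has the larger sign: the others
  -- are obtained from `-α, -β`.
  have key : ∀ α β : ℝ, ∀ l m h : Θ, l < m → m < h →
      (0 < α * f₁ m + β * f₂ m → 0 < α * f₁ l + β * f₂ l ∨ 0 < α * f₁ h + β * f₂ h) ∧
      (α * f₁ m + β * f₂ m = 0 → ¬(α * f₁ l + β * f₂ l < 0 ∧ α * f₁ h + β * f₂ h < 0)) := by
    intro α β l m h hlm hmh
    have d1 := hr.1 l m hlm
    have d2 := hr.1 m h hmh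
    have d3 := hr.1 l h (hlm.trans hmh)
    have e := hr.2 l m h hlm hmh
    have b1 := h₁.betw hlm.le hmh.le
    have b2 := h₂.betw hlm.le hmh.le
    generalize f₁ l = xl at *
    generalize f₁ m = xm at *
    generalize f₁ h = xh at *
    generalize f₂ l = yl at *
    generalize f₂ m = ym at *
    generalize f₂ h = yh at *
    have idn : (α * xl + β * yl) * (xh * ym - xm * yh) + (α * xh + β * yh) * (xm * yl - xl * ym)
      = (α * xm + β * ym) * (xh * yl - xl * yh) := by ring
    constructor
    · intro hm
      by_contra hcon
      push Not at hcon
      obtain ⟨hl, hh⟩ := hcon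
      have z3 : xl * yh = xh * yl := by
        have q1 := mul_nonneg (neg_nonneg.2 hl) (sub_nonneg.2 d2)
        have q2 := mul_nonneg (neg_nonneg.2 hh) (sub_nonneg.2 d1)
        by_contra hne
        have q3 := mul_pos hm (sub_pos.2 (lt_of_le_of_ne d3 hne))
        linarith
      obtain ⟨z1, z2⟩ := e.1 z3
      -- All three vectors are multiples of the one at `m`, with coefficients `≤ 0` at `l` and `h`.
      set S := α * xm + β * ym with hS
      have r1 : xl * S = (α * xl + β * yl) * xm := by rw [hS]; linear_combination β * z1
      have r2 : yl * S = (α * xl + β * yl) * ym := by rw [hS]; linear_combination (-α) * z1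
      have r3 : xh * S = (α * xh + β * yh) * xm := by rw [hS]; linear_combination (-β) * z2
      have r4 : yh * S = (α * xh + β * yh) * ym := by rw [hS]; linear_combination α * z2
      have aux : ∀ p q r : ℝ, Betw p q r → p * S = (α * xl + β * yl) * q →
          r * S = (α * xh + β * yh) * q → q = 0 := by
        intro p q r hb hp hq
        rcases lt_trichotomy q 0 with hq0 | hq0 | hq0
        · rcases hb.2.1 hq0 with k | k
          · nlinarith [mul_pos_of_neg_of_neg k (neg_neg_of_pos hm)]
          · nlinarith [mul_pos_of_neg_of_neg k (neg_neg_of_pos hm)]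
        · exact hq0
        · rcases hb.1 hq0 with k | k
          · nlinarith [mul_pos k hm]
          · nlinarith [mul_pos k hm]
      have x0 := aux _ _ _ b1 r1 r3
      have y0 := aux _ _ _ b2 r2 r4
      rw [hS, x0, y0] at hm
      simp at hm
    · rintro hm ⟨hl, hh⟩
      rw [hm, zero_mul] at idn
      have q1 := mul_nonneg (neg_nonneg.2 hl.le) (sub_nonneg.2 d2)
      have q2 := mul_nonneg (neg_nonneg.2 hh.le) (sub_nonneg.2 d1)
      have z2 : xm * yh = xh * ym := by
        have : (α * xl + β * yl) * (xh * ym - xm * yh) = 0 := by linarith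
        rcases mul_eq_zero.1 this with k | k <;> linarith
      have z1 : xl * ym = xm * yl := by
        have : (α * xh + β * yh) * (xm * yl - xl * ym) = 0 := by linarith
        rcases mul_eq_zero.1 this with k | k <;> linarith
      have z3 := e.2 ⟨z1, z2⟩
      -- The vector at `m` vanishes: otherwise the one at `l` would be a multiple of it.
      have xm0 : (α * xl + β * yl) * xm = 0 := by linear_combination xl * hm - β * z1
      have ym0 : (α * xl + β * yl) * ym = 0 := by linear_combination yl * hm + α * z1
      have xm0 : xm = 0 := (mul_eq_zero.1 xm0).resolve_left hl.ne
      have ym0 : ym = 0 := (mul_eq_zero.1 ym0).resolve_left hl.ne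
      have r1 : xl * (α * xh + β * yh) = (α * xl + β * yl) * xh := by linear_combination β * z3
      have r2 : yl * (α * xh + β * yh) = (α * xl + β * yl) * yh := by linear_combination (-α) * z3
      have aux : ∀ p q r : ℝ, Betw p q r → q = 0 →
          p * (α * xh + β * yh) = (α * xl + β * yl) * r → r = 0 := by
        intro p q r hb hq hp
        obtain ⟨k1, k2⟩ := hb.2.2 hq
        rcases lt_trichotomy r 0 with hr | hr | hr
        · exact absurd ⟨by nlinarith [mul_pos_of_neg_of_neg hl hr], hr⟩ k2
        · exact hr
        · exact absurd ⟨by nlinarith [mul_neg_of_neg_of_pos hl hr], hr⟩ k1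
      have x0 := aux _ _ _ b1 xm0 r1
      have y0 := aux _ _ _ b2 ym0 r2
      rw [x0, y0] at hh
      simp at hh
  refine singleCrossing_of_betw hub hlb fun l m h hlm hmh => ?_
  rcases hlm.eq_or_lt with rfl | hlm
  · unfold Betw; grind
  rcases hmh.eq_or_lt with rfl | hmh
  · unfold Betw; grind
  obtain ⟨p1, p2⟩ := key α β l m h hlm hmh
  obtain ⟨p3, p4⟩ := key (-α) (-β) l m h hlm hmh
  have hneg : ∀ x y : ℝ, -α * x + -β * y = -(α * x + β * y) := fun x y => by ring
  simp only [hneg, neg_pos, neg_eq_zero, neg_lt_zero] at p3 p4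
  exact ⟨p1, p3, fun h0 => ⟨p4 h0, p2 h0⟩⟩

/-! ### Linear spaces of single-crossing functions -/

/-- On a linear space of single-crossing functions, evaluation at an intermediate point is a
nonnegative combination of the evaluations at the endpoints. The proof distinguishes the rank of
`v ↦ (v l, v h)`. -/
lemma exists_cone (V : Submodule ℝ (Θ → ℝ)) (hV : ∀ v ∈ V, SingleCrossing v) {l m h : Θ}
    (hlm : l ≤ m) (hmh : m ≤ h) :
    ∃ c d : ℝ, 0 ≤ c ∧ 0 ≤ d ∧ ∀ v ∈ V, v m = c * v l + d * v h := by
  have hB : ∀ v ∈ V, Betw (v l) (v m) (v h) := fun v hv => (hV v hv).betw hlm hmh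
  have hz : ∀ v ∈ V, v l = 0 → v h = 0 → v m = 0 := by
    intro v hv h1 h2
    have := hB v hv
    unfold Betw at this
    grind
  by_cases h2 : ∃ v ∈ V, ∃ w ∈ V, v l * w h - v h * w l ≠ 0
  · obtain ⟨v, hv, w, hw, hD⟩ := h2
    set D := v l * w h - v h * w l with hDdef
    obtain ⟨p, hp, p1, p2⟩ : ∃ p ∈ V, p l = 1 ∧ p h = 0 := by
      refine ⟨(w h / D) • v - (v h / D) • w,
        V.sub_mem (V.smul_mem _ hv) (V.smul_mem _ hw), ?_, ?_⟩
      · simp only [Pi.sub_apply, Pi.smul_apply, smul_eq_mul]; field_simp; rw [hDdef]; ring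
      · simp only [Pi.sub_apply, Pi.smul_apply, smul_eq_mul]; field_simp; ring
    obtain ⟨q, hq, q1, q2⟩ : ∃ q ∈ V, q l = 0 ∧ q h = 1 := by
      refine ⟨(v l / D) • w - (w l / D) • v,
        V.sub_mem (V.smul_mem _ hw) (V.smul_mem _ hv), ?_, ?_⟩
      · simp only [Pi.sub_apply, Pi.smul_apply, smul_eq_mul]; field_simp; ring
      · simp only [Pi.sub_apply, Pi.smul_apply, smul_eq_mul]; field_simp; rw [hDdef]; ring
    refine ⟨p m, q m, ?_, ?_, fun x hx => ?_⟩
    · by_contra hc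
      have := (hB p hp).2.1 (not_le.1 hc)
      rw [p1, p2] at this
      norm_num at this
    · by_contra hc
      have := (hB q hq).2.1 (not_le.1 hc)
      rw [q1, q2] at this
      norm_num at this
    · have := hz (x - x l • p - x h • q)
        (V.sub_mem (V.sub_mem hx (V.smul_mem _ hp)) (V.smul_mem _ hq))
        (by simp [p1, q1]) (by simp [p2, q2])
      simp only [Pi.sub_apply, Pi.smul_apply, smul_eq_mul] at this
      linarith
  · push Not at h2
    by_cases h1 : ∃ p ∈ V, p l ≠ 0 ∨ p h ≠ 0
    · obtain ⟨p, hp, hne⟩ := h1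
      have hk : ∀ v ∈ V, ∃ k : ℝ, v l = k * p l ∧ v h = k * p h ∧ v m = k * p m := by
        intro v hv
        have hD := h2 v hv p hp
        obtain ⟨k, k1, k2⟩ : ∃ k : ℝ, v l = k * p l ∧ v h = k * p h := by
          rcases hne with hne | hne
          · refine ⟨v l / p l, by field_simp, ?_⟩
            field_simp; linarith
          · refine ⟨v h / p h, ?_, by field_simp⟩
            field_simp; linarith
        refine ⟨k, k1, k2, ?_⟩
        have := hz (v - k • p) (V.sub_mem hv (V.smul_mem _ hp)) (by simp [k1]) (by simp [k2])
        simp only [Pi.sub_apply, Pi.smul_apply, smul_eq_mul] at this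
        linarith
      obtain ⟨c, d, hc, hd, hcd⟩ : ∃ c d : ℝ, 0 ≤ c ∧ 0 ≤ d ∧ p m = c * p l + d * p h := by
        rcases lt_trichotomy (p m) 0 with k | k | k
        · rcases (hB p hp).2.1 k with j | j
          · exact ⟨p m / p l, 0, (div_pos_of_neg_of_neg k j).le, le_rfl, by
              have := j.ne; field_simp; ring⟩
          · exact ⟨0, p m / p h, le_rfl, (div_pos_of_neg_of_neg k j).le, by
              have := j.ne; field_simp; ring⟩
        · exact ⟨0, 0, le_rfl, le_rfl, by simp [k]⟩
        · rcases (hB p hp).1 k with j | j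
          · exact ⟨p m / p l, 0, (div_pos k j).le, le_rfl, by field_simp; ring⟩
          · exact ⟨0, p m / p h, le_rfl, (div_pos k j).le, by field_simp; ring⟩
      refine ⟨c, d, hc, hd, fun v hv => ?_⟩
      obtain ⟨k, k1, k2, k3⟩ := hk v hv
      rw [k1, k2, k3, hcd]; ring
    · push Not at h1
      exact ⟨0, 0, le_rfl, le_rfl, fun v hv => by simp [hz v hv (h1 v hv).1 (h1 v hv).2]⟩

/-- Any two elements of a linear space of single-crossing functions are ratio ordered. The cone
property makes the determinants at nested pairs nonnegative multiples of each other. -/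
lemma ratioOrdered_of_mem
    (hub : ∀ θ₁ θ₂ : Θ, ∃ θ : Θ, θ₁ ≤ θ ∧ θ₂ ≤ θ)
    (hlb : ∀ θ₁ θ₂ : Θ, ∃ θ : Θ, θ ≤ θ₁ ∧ θ ≤ θ₂)
    (V : Submodule ℝ (Θ → ℝ)) (hV : ∀ v ∈ V, SingleCrossing v) {f₁ f₂ : Θ → ℝ}
    (h₁ : f₁ ∈ V) (h₂ : f₂ ∈ V) : RatioOrdered f₁ f₂ := by
  have plus : ∀ l m h : Θ, l < m → m < h →
      (f₁ l * f₂ h = f₁ h * f₂ l ↔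
      (f₁ l * f₂ m = f₁ m * f₂ l ∧ f₁ m * f₂ h = f₁ h * f₂ m)) := by
    intro l m h hlm hmh
    obtain ⟨c, d, -, -, hcd⟩ := exists_cone V hV hlm.le hmh.le
    have e1 := hcd f₁ h₁
    have e2 := hcd f₂ h₂
    constructor
    · intro H
      rw [e1, e2]
      exact ⟨by linear_combination d * H, by linear_combination c * H⟩
    · rintro ⟨H1, H2⟩
      by_contra hne
      have hD : f₁ l * f₂ h - f₁ h * f₂ l ≠ 0 := sub_ne_zero.2 hne
      rw [e1, e2] at H1 H2
      have hd : d = 0 := (mul_eq_zero.1 (show d * (f₁ l * f₂ h - f₁ h * f₂ l) = 0 by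
        linear_combination H1)).resolve_right hD
      have hc : c = 0 := (mul_eq_zero.1 (show c * (f₁ l * f₂ h - f₁ h * f₂ l) = 0 by
        linear_combination H2)).resolve_right hD
      set D := f₁ l * f₂ h - f₁ h * f₂ l with hDdef
      -- By Cramer's rule, this combination takes the value `1` at both `l` and `h`; since
      -- `c = d = 0`, it vanishes at `m`.
      have hF : ((f₂ h - f₂ l) / D) • f₁ + ((f₁ l - f₁ h) / D) • f₂ ∈ V :=
        V.add_mem (V.smul_mem _ h₁) (V.smul_mem _ h₂)
      have hb := (hV _ hF).betw hlm.le hmh.le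
      have v1 : (((f₂ h - f₂ l) / D) • f₁ + ((f₁ l - f₁ h) / D) • f₂) l = 1 := by
        simp only [Pi.add_apply, Pi.smul_apply, smul_eq_mul]; field_simp; rw [hDdef]; ring
      have v2 : (((f₂ h - f₂ l) / D) • f₁ + ((f₁ l - f₁ h) / D) • f₂) h = 1 := by
        simp only [Pi.add_apply, Pi.smul_apply, smul_eq_mul]; field_simp; rw [hDdef]; ring
      have v3 := hcd _ hF
      rw [hc, hd] at v3
      rw [v1, v2] at hb
      exact (hb.2.2 (by rw [v3]; simp)).1 ⟨one_pos, one_pos⟩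
  -- The determinant at `l ≤ h` is a nonnegative multiple of the one at any enclosing pair.
  have mult : ∀ L l h H : Θ, L ≤ l → l ≤ h → h ≤ H → ∃ k : ℝ, 0 ≤ k ∧
      f₁ l * f₂ h - f₁ h * f₂ l = k * (f₁ L * f₂ H - f₁ H * f₂ L) := by
    intro L l h H hL hlh hH
    obtain ⟨c, d, hc, hd, hcd⟩ := exists_cone V hV (hL.trans hlh) hH
    obtain ⟨c', d', hc', hd', hcd'⟩ := exists_cone V hV hL hlh
    refine ⟨c' * d, by positivity, ?_⟩
    rw [hcd' f₁ h₁, hcd' f₂ h₂, hcd f₁ h₁, hcd f₂ h₂]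
    ring
  by_cases hRD : ∀ l h : Θ, l < h → f₁ l * f₂ h ≤ f₁ h * f₂ l
  · exact Or.inl ⟨hRD, plus⟩
  · right
    push Not at hRD
    obtain ⟨l, h, hlh, hpos⟩ := hRD
    constructor
    · intro l' h' hlh'
      obtain ⟨L, hL, hL'⟩ := hlb l l'
      obtain ⟨H, hH, hH'⟩ := hub h h'
      obtain ⟨k, hk, e⟩ := mult L l h H hL hlh.le hH
      obtain ⟨k', hk', e'⟩ := mult L l' h' H hL' hlh'.le hH'
      have hD : 0 < f₁ L * f₂ H - f₁ H * f₂ L := by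
        by_contra hneg
        have := mul_nonneg hk (neg_nonneg.2 (not_lt.1 hneg))
        linarith
      have := mul_nonneg hk' hD.le
      linarith
    · intro l m h hlm hmh
      have := plus l m h hlm hmh
      constructor
      · intro H
        obtain ⟨p, q⟩ := this.1 (by linarith)
        exact ⟨by linarith, by linarith⟩
      · rintro ⟨p, q⟩
        have := this.2 ⟨by linarith, by linarith⟩
        linarith

/-- A linear space of single-crossing functions is spanned by two of its elements. -/
lemma exists_basis
    (hub : ∀ θ₁ θ₂ : Θ, ∃ θ : Θ, θ₁ ≤ θ ∧ θ₂ ≤ θ)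
    (hlb : ∀ θ₁ θ₂ : Θ, ∃ θ : Θ, θ ≤ θ₁ ∧ θ ≤ θ₂)
    (V : Submodule ℝ (Θ → ℝ)) (hV : ∀ v ∈ V, SingleCrossing v) :
    ∃ f₁ ∈ V, ∃ f₂ ∈ V, ∀ w ∈ V, ∃ α β : ℝ, ∀ θ, w θ = α * f₁ θ + β * f₂ θ := by
  by_cases h2 : ∃ v ∈ V, ∃ w ∈ V, ∃ l h : Θ, l ≤ h ∧ v l * w h - v h * w l ≠ 0
  · obtain ⟨v, hv, w, hw, l, h, hlh, hD⟩ := h2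
    refine ⟨v, hv, w, hw, fun x hx => ?_⟩
    -- The coefficients make `x - α v - β w` vanish at `l` and `h`.
    obtain ⟨α, β, e1, e2⟩ : ∃ α β : ℝ, x l = α * v l + β * w l ∧ x h = α * v h + β * w h := by
      refine ⟨(x l * w h - x h * w l) / (v l * w h - v h * w l),
        (v l * x h - v h * x l) / (v l * w h - v h * w l), ?_, ?_⟩
      · rw [div_mul_eq_mul_div, div_mul_eq_mul_div, ← add_div, eq_div_iff hD]; ring
      · rw [div_mul_eq_mul_div, div_mul_eq_mul_div, ← add_div, eq_div_iff hD]; ring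
    refine ⟨α, β, fun θ => ?_⟩
    obtain ⟨L, hL, hL'⟩ := hlb l θ
    obtain ⟨H, hH, hH'⟩ := hub h θ
    obtain ⟨a, b, -, -, hab⟩ := exists_cone V hV hL (hlh.trans hH)
    obtain ⟨c, d, -, -, hcd⟩ := exists_cone V hV (hL.trans hlh) hH
    obtain ⟨r, s, -, -, hrs⟩ := exists_cone V hV hL' hH'
    have hz : x - α • v - β • w ∈ V :=
      V.sub_mem (V.sub_mem hx (V.smul_mem _ hv)) (V.smul_mem _ hw)
    have zl : (x - α • v - β • w) l = 0 := by simp [e1]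
    have zh : (x - α • v - β • w) h = 0 := by simp [e2]
    have zθ : (x - α • v - β • w) θ = x θ - (α * v θ + β * w θ) := by simp; ring
    generalize x - α • v - β • w = z at *
    have hdet : a * d - b * c ≠ 0 := by
      intro h0
      apply hD
      rw [hab v hv, hab w hw, hcd v hv, hcd w hw]
      linear_combination (v L * w H - v H * w L) * h0
    rw [hab z hz] at zl
    rw [hcd z hz] at zh
    have zL : z L = 0 := (mul_eq_zero.1 (show (a * d - b * c) * z L = 0 by
      linear_combination d * zl - b * zh)).resolve_left hdet
    have zH : z H = 0 := (mul_eq_zero.1 (show (a * d - b * c) * z H = 0 by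
      linear_combination a * zh - c * zl)).resolve_left hdet
    have := hrs z hz
    rw [zL, zH, zθ] at this
    linarith
  · push Not at h2
    by_cases h1 : ∃ v ∈ V, ∃ θ, v θ ≠ 0
    · obtain ⟨v, hv, θ₀, h0⟩ := h1
      refine ⟨v, hv, 0, V.zero_mem, fun x hx => ⟨x θ₀ / v θ₀, 0, fun θ => ?_⟩⟩
      obtain ⟨L, hL, hL'⟩ := hlb θ₀ θ
      obtain ⟨H, hH, hH'⟩ := hub θ₀ θ
      obtain ⟨a, b, -, -, hab⟩ := exists_cone V hV hL hH
      obtain ⟨c, d, -, -, hcd⟩ := exists_cone V hV hL' hH'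
      have hD := h2 x hx v hv L H (hL.trans hH)
      simp only [Pi.zero_apply, mul_zero, add_zero]
      field_simp
      rw [hcd x hx, hcd v hv, hab x hx, hab v hv]
      linear_combination (c * b - a * d) * hD
    · push Not at h1
      exact ⟨0, V.zero_mem, 0, V.zero_mem, fun w hw => ⟨0, 0, fun θ => by simp [h1 w hw θ]⟩⟩

end

/-! ### The space of utility differences -/

/-- In a convex environment, the nonnegative multiples of utility differences form a linear
space. -/
def diffSpace {Θ A : Type*} (u : A → Θ → ℝ) (hconv : ConvexEnv u) (a₀ : A) :
    Submodule ℝ (Θ → ℝ) where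
  carrier := {v | ∃ (c : ℝ) (a a' : A), 0 ≤ c ∧ ∀ θ, v θ = c * (u a θ - u a' θ)}
  zero_mem' := ⟨0, a₀, a₀, le_rfl, fun θ => by simp⟩
  add_mem' := by
    rintro v w ⟨c, a, a', hc, hv⟩ ⟨d, b, b', hd, hw⟩
    rcases hc.eq_or_lt with rfl | hc
    · exact ⟨d, b, b', hd, fun θ => by simp [hv, hw]⟩
    rcases hd.eq_or_lt with rfl | hd
    · exact ⟨c, a, a', hc.le, fun θ => by simp [hv, hw]⟩
    have h0 : 0 < c / (c + d) := by positivity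
    have h1 : c / (c + d) < 1 := by rw [div_lt_one (by positivity)]; linarith
    obtain ⟨p, hp⟩ := hconv a b _ h0 h1
    obtain ⟨q, hq⟩ := hconv a' b' _ h0 h1
    refine ⟨c + d, p, q, by positivity, fun θ => ?_⟩
    rw [Pi.add_apply, hv, hw, hp, hq]
    field_simp
    ring
  smul_mem' := by
    rintro k v ⟨c, a, a', hc, hv⟩
    rcases le_total 0 k with hk | hk
    · exact ⟨k * c, a, a', mul_nonneg hk hc, fun θ => by simp [hv]; ring⟩
    · exact ⟨-k * c, a', a, mul_nonneg (neg_nonneg.2 hk) hc, fun θ => by simp [hv]; ring⟩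

lemma diffSpace_singleCrossing {Θ A : Type*} [PartialOrder Θ] {u : A → Θ → ℝ}
    (hconv : ConvexEnv u) (a₀ : A) (hu : SCD u) :
    ∀ v ∈ diffSpace u hconv a₀, SingleCrossing v := by
  rintro v ⟨c, a, a', hc, hv⟩
  obtain rfl : v = fun θ => c * (u a θ - u a' θ) := funext hv
  rcases hc.eq_or_lt with rfl | hc
  · left; intro x y _; simp
  · have hs : ∀ x : ℝ, Real.sign (c * x) = Real.sign x := fun x => by
      rcases lt_trichotomy x 0 with k | rfl | k
      · rw [Real.sign_of_neg k, Real.sign_of_neg (mul_neg_of_pos_of_neg hc k)]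
      · simp
      · rw [Real.sign_of_pos k, Real.sign_of_pos (mul_pos hc k)]
    unfold SingleCrossing
    simp only [hs]
    exact hu a a'

/-- In a convex environment, `u` has SCD iff it has the
two-statistic form with single-crossing, ratio-ordered coefficient functions. -/
theorem scd_in_convex_env_iff {Θ A : Type*} [PartialOrder Θ]
    (hub : ∀ θ₁ θ₂ : Θ, ∃ θ : Θ, θ₁ ≤ θ ∧ θ₂ ≤ θ)
    (hlb : ∀ θ₁ θ₂ : Θ, ∃ θ : Θ, θ ≤ θ₁ ∧ θ ≤ θ₂)
    (u : A → Θ → ℝ) (hconv : ConvexEnv u) :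
    SCD u ↔
      ∃ (g₁ g₂ : A → ℝ) (f₁ f₂ h : Θ → ℝ),
        SingleCrossing f₁ ∧ SingleCrossing f₂ ∧ RatioOrdered f₁ f₂ ∧
        (∀ (a : A) (θ : Θ), u a θ = g₁ a * f₁ θ + g₂ a * f₂ θ + h θ) := by
  constructor
  · intro hu
    rcases isEmpty_or_nonempty A with hA | ⟨⟨a₀⟩⟩
    · refine ⟨0, 0, 0, 0, 0, ?_, ?_, ?_, fun a => hA.elim a⟩
      · left; intro x y _; simp
      · left; intro x y _; simp
      · left; constructor <;> simp
    have hV := diffSpace_singleCrossing hconv a₀ hu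
    obtain ⟨f₁, h₁, f₂, h₂, hspan⟩ := exists_basis hub hlb _ hV
    have hmem : ∀ a, (fun θ => u a θ - u a₀ θ) ∈ diffSpace u hconv a₀ :=
      fun a => ⟨1, a, a₀, zero_le_one, fun θ => by simp⟩
    choose g₁ g₂ hg using fun a => hspan _ (hmem a)
    refine ⟨g₁, g₂, f₁, f₂, u a₀, hV _ h₁, hV _ h₂, ratioOrdered_of_mem hub hlb _ hV h₁ h₂,
      fun a θ => ?_⟩
    rw [← hg a θ]
    ring
  · rintro ⟨g₁, g₂, f₁, f₂, h, h₁, h₂, hr, hu⟩ a a'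
    rcases hr with hr | hr
    · convert singleCrossing_comb hub hlb h₁ h₂ hr (g₁ a - g₁ a') (g₂ a - g₂ a') using 2 with θ
      rw [hu, hu]; ring
    · convert singleCrossing_comb hub hlb h₂ h₁ hr (g₂ a - g₂ a') (g₁ a - g₁ a') using 2 with θ
      rw [hu, hu]; ring
end

section
/- Let Θ be a partially ordered set in which every pair of elements has an upper bound and a lower bound in Θ, and suppose Θ has a minimum element θ̲ and a maximum element θ̄ (i.e., θ̲ ≤ θ ≤ θ̄ for all θ ∈ Θ). Let A be a set and let u : A × Θ → ℝ be such that the environment (A, Θ, u) is convex. Then u has single-crossing differences (SCD) if and only if there exist functions b : Θ → ℝ with b(θ) > 0 for all θ, c : Θ → ℝ, and an increasing function λ : Θ → [0,1] such that, defining ũ(a,θ) = b(θ)·u(a,θ) + c(θ), one has ũ(a, θ) = λ(θ)·ũ(a, θ̄) + (1 − λ(θ))·ũ(a, θ̲) for all a ∈ A and θ ∈ Θ. -/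
lemma zero_le_sign_iff (x : ℝ) : 0 ≤ Real.sign x ↔ 0 ≤ x := by
  rcases lt_trichotomy x 0 with h | h | h
  · rw [Real.sign_of_neg h]; constructor <;> intro <;> linarith
  · simp [h]
  · rw [Real.sign_of_pos h]; constructor <;> intro <;> linarith

lemma zero_lt_sign_iff (x : ℝ) : 0 < Real.sign x ↔ 0 < x := by
  rcases lt_trichotomy x 0 with h | h | h
  · rw [Real.sign_of_neg h]; constructor <;> intro <;> linarith
  · simp [h]
  · rw [Real.sign_of_pos h]; constructor <;> intro <;> linarith

lemma sign_mono : Monotone Real.sign := by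
  intro x y hxy
  rcases lt_trichotomy x 0 with h | h | h
  · rw [Real.sign_of_neg h]
    rcases Real.sign_apply_eq y with h' | h' | h' <;> rw [h'] <;> norm_num
  · rw [h, Real.sign_zero]; exact (zero_le_sign_iff y).2 (by linarith)
  · rw [Real.sign_of_pos h, Real.sign_of_pos (by linarith)]

lemma sign_mul_of_pos {b : ℝ} (hb : 0 < b) (x : ℝ) : Real.sign (b * x) = Real.sign x := by
  rcases lt_trichotomy x 0 with h | h | h
  · rw [Real.sign_of_neg h, Real.sign_of_neg (mul_neg_of_pos_of_neg hb h)]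
  · simp [h]
  · rw [Real.sign_of_pos h, Real.sign_of_pos (mul_pos hb h)]

section

variable {Θ A : Type*} [PartialOrder Θ]

lemma SingleCrossing.neg {f : Θ → ℝ} (hf : SingleCrossing f) : SingleCrossing (-f) := by
  have key : ∀ θ, Real.sign ((-f) θ) = - Real.sign (f θ) := fun θ => by
    simp [Real.sign_neg]
  rcases hf with h | h
  · right; intro x y hxy; simp only [key]; exact neg_le_neg (h hxy)
  · left; intro x y hxy; simp only [key]; exact neg_le_neg (h hxy)

lemma SingleCrossing.smul {f : Θ → ℝ} (hf : SingleCrossing f) {t : ℝ} (ht : 0 ≤ t) :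
    SingleCrossing (t • f) := by
  rcases ht.eq_or_lt with rfl | ht
  · left; intro x y _; simp
  · simpa only [SingleCrossing, Pi.smul_apply, smul_eq_mul, sign_mul_of_pos ht] using hf

lemma SingleCrossing.nonneg {f : Θ → ℝ} (hf : SingleCrossing f) {x y z : Θ} (hxy : x ≤ y)
    (hyz : y ≤ z) (hx : 0 ≤ f x) (hz : 0 ≤ f z) : 0 ≤ f y := by
  rw [← zero_le_sign_iff] at *
  rcases hf with h | h
  · exact hx.trans (h hxy)
  · exact hz.trans (h hyz)

lemma SingleCrossing.pos {f : Θ → ℝ} (hf : SingleCrossing f) {x y z : Θ} (hxy : x ≤ y)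
    (hyz : y ≤ z) (hx : 0 < f x) (hz : 0 < f z) : 0 < f y := by
  rw [← zero_lt_sign_iff] at *
  rcases hf with h | h
  · exact hx.trans_le (h hxy)
  · exact hz.trans_le (h hyz)

lemma SingleCrossing.eq_zero {f : Θ → ℝ} (hf : SingleCrossing f) {x y z : Θ} (hxy : x ≤ y)
    (hyz : y ≤ z) (hx : f x = 0) (hz : f z = 0) : f y = 0 := by
  have h1 := hf.nonneg hxy hyz hx.ge hz.ge
  have h2 := hf.neg.nonneg hxy hyz (by simp [hx]) (by simp [hz])
  simp only [Pi.neg_apply] at h2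
  linarith

/-- The nonnegative multiples of differences `u a - u a'`; in a convex environment with at least one
action this is the linear span of these differences. -/
def diffCone (u : A → Θ → ℝ) : Set (Θ → ℝ) :=
  {f | ∃ (t : ℝ) (a a' : A), 0 ≤ t ∧ f = t • (u a - u a')}

lemma diffCone_smul {u : A → Θ → ℝ} {f : Θ → ℝ} (hf : f ∈ diffCone u) (s : ℝ) :
    s • f ∈ diffCone u := by
  obtain ⟨t, a, a', ht, rfl⟩ := hf
  rcases le_total 0 s with hs | hs
  · exact ⟨s * t, a, a', mul_nonneg hs ht, by rw [mul_smul]⟩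
  · refine ⟨-s * t, a', a, mul_nonneg (by linarith) ht, ?_⟩
    ext θ; simp only [Pi.smul_apply, Pi.sub_apply, smul_eq_mul]; ring

/-- Convexity is used here: with `p = t / (t + s)`, the two mixtures `p a + (1 - p) d` and
`p a' + (1 - p) d'` realize the normalized sum of `t (a - a')` and `s (d - d')` as one difference. -/
lemma diffCone_add {u : A → Θ → ℝ} (hconv : ConvexEnv u) {f g : Θ → ℝ} (hf : f ∈ diffCone u)
    (hg : g ∈ diffCone u) : f + g ∈ diffCone u := by
  obtain ⟨t, a, a', ht, rfl⟩ := hf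
  obtain ⟨s, d, d', hs, rfl⟩ := hg
  rcases ht.eq_or_lt with rfl | ht
  · exact ⟨s, d, d', hs, by simp⟩
  rcases hs.eq_or_lt with rfl | hs
  · exact ⟨t, a, a', ht.le, by simp⟩
  have hts : 0 < t + s := by linarith
  have hp0 : 0 < t / (t + s) := by positivity
  have hp1 : t / (t + s) < 1 := by rw [div_lt_one hts]; linarith
  obtain ⟨x, hx⟩ := hconv a d _ hp0 hp1
  obtain ⟨y, hy⟩ := hconv a' d' _ hp0 hp1
  refine ⟨t + s, x, y, hts.le, ?_⟩
  ext θ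
  simp only [Pi.add_apply, Pi.smul_apply, Pi.sub_apply, smul_eq_mul, hx, hy]
  field_simp
  ring

lemma diffCone_singleCrossing {u : A → Θ → ℝ} (h : SCD u) {f : Θ → ℝ} (hf : f ∈ diffCone u) :
    SingleCrossing f := by
  obtain ⟨t, a, a', ht, rfl⟩ := hf
  exact SingleCrossing.smul (f := u a - u a') (h a a') ht

/-- The representation for the linear space of differences, where no additive term is needed. -/
def DiffRep (V : Set (Θ → ℝ)) (θmin θmax : Θ) : Prop :=
  ∃ b lam : Θ → ℝ, (∀ θ, 0 < b θ) ∧ (∀ θ, lam θ ∈ Set.Icc (0 : ℝ) 1) ∧ Monotone lam ∧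
    ∀ g ∈ V, ∀ θ, b θ * g θ = lam θ * (b θmax * g θmax) + (1 - lam θ) * (b θmin * g θmin)

lemma diffRep_of_multiples {V : Set (Θ → ℝ)} {θmin θmax : Θ} (hmin : ∀ θ, θmin ≤ θ)
    (hmax : ∀ θ, θ ≤ θmax) {f : Θ → ℝ} (hf : SingleCrossing f)
    (hV : ∀ g ∈ V, ∃ k : ℝ, g = k • f) : DiffRep V θmin θmax := by
  -- `b` turns `f` into its sign
  have hb : ∀ θ, ∃ b : ℝ, 0 < b ∧ b * f θ = Real.sign (f θ) := by
    intro θ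
    rcases lt_trichotomy (f θ) 0 with h | h | h
    · exact ⟨-(f θ)⁻¹, by simpa using inv_lt_zero.2 h, by
        rw [Real.sign_of_neg h, neg_mul, inv_mul_cancel₀ h.ne]⟩
    · exact ⟨1, one_pos, by simp [h]⟩
    · exact ⟨(f θ)⁻¹, inv_pos.2 h, by rw [Real.sign_of_pos h, inv_mul_cancel₀ h.ne']⟩
  choose b hb0 hb using hb
  obtain ⟨lam, hlam, hmono, hrep⟩ : ∃ lam : Θ → ℝ, (∀ θ, lam θ ∈ Set.Icc (0 : ℝ) 1) ∧
      Monotone lam ∧ ∀ θ, Real.sign (f θ) =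
        lam θ * Real.sign (f θmax) + (1 - lam θ) * Real.sign (f θmin) := by
    by_cases hs : Real.sign (f θmax) = Real.sign (f θmin)
    · refine ⟨fun _ => 0, by simp, monotone_const, fun θ => ?_⟩
      rcases hf with h | h
      · have h1 := h (hmin θ); have h2 := h (hmax θ)
        simp only at h1 h2; linarith
      · have h1 := h (hmin θ); have h2 := h (hmax θ)
        simp only at h1 h2; linarith
    · have hne : Real.sign (f θmax) - Real.sign (f θmin) ≠ 0 := sub_ne_zero.2 hs
      refine ⟨fun θ => (Real.sign (f θ) - Real.sign (f θmin)) /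
        (Real.sign (f θmax) - Real.sign (f θmin)), ?_, ?_, ?_⟩
      · intro θ
        rcases hf with h | h
        · have h1 := h (hmin θ); have h2 := h (hmax θ)
          simp only at h1 h2
          exact ⟨div_nonneg (by linarith) (by linarith),
            div_le_one_of_le₀ (by linarith) (by linarith)⟩
        · have h1 := h (hmin θ); have h2 := h (hmax θ)
          simp only at h1 h2
          exact ⟨div_nonneg_of_nonpos (by linarith) (by linarith),
            div_le_one_of_ge (by linarith) (by linarith)⟩
      · intro x y hxy
        rcases hf with h | h
        · have h1 := h (hmin θmax); have h2 := h hxy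
          simp only at h1 h2 ⊢
          exact div_le_div_of_nonneg_right (by linarith) (by linarith)
        · have h1 := h (hmin θmax); have h2 := h hxy
          simp only at h1 h2 ⊢
          exact div_le_div_of_nonpos_of_le (by linarith) (by linarith)
      · intro θ
        field_simp
        ring
  refine ⟨b, lam, hb0, hlam, hmono, fun g hg θ => ?_⟩
  obtain ⟨k, rfl⟩ := hV g hg
  simp only [Pi.smul_apply, smul_eq_mul]
  linear_combination k * hb θ + k * hrep θ - k * lam θ * hb θmax - k * (1 - lam θ) * hb θmin

lemma diffRep_of_dual_basis {V : Set (Θ → ℝ)} {θmin θmax : Θ} (hmin : ∀ θ, θmin ≤ θ)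
    (hmax : ∀ θ, θ ≤ θmax) (hsmul : ∀ f ∈ V, ∀ s : ℝ, s • f ∈ V)
    (hadd : ∀ f ∈ V, ∀ g ∈ V, f + g ∈ V) (hsc : ∀ f ∈ V, SingleCrossing f)
    {e₀ e₁ : Θ → ℝ} (he₀ : e₀ ∈ V) (he₁ : e₁ ∈ V) (h00 : e₀ θmin = 1) (h01 : e₀ θmax = 0)
    (h10 : e₁ θmin = 0) (h11 : e₁ θmax = 1) : DiffRep V θmin θmax := by
  have p0 : ∀ θ, 0 ≤ e₀ θ := fun θ =>
    (hsc _ he₀).nonneg (hmin θ) (hmax θ) (by simp [h00]) (by simp [h01])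
  have p1 : ∀ θ, 0 ≤ e₁ θ := fun θ =>
    (hsc _ he₁).nonneg (hmin θ) (hmax θ) (by simp [h10]) (by simp [h11])
  have ps : ∀ θ, 0 < e₀ θ + e₁ θ := fun θ =>
    (hsc _ (hadd _ he₀ _ he₁)).pos (hmin θ) (hmax θ) (by simp [h00, h10]) (by simp [h01, h11])
  refine ⟨fun θ => (e₀ θ + e₁ θ)⁻¹, fun θ => e₁ θ / (e₀ θ + e₁ θ), fun θ => inv_pos.2 (ps θ),
    fun θ => ⟨div_nonneg (p1 θ) (ps θ).le,
      div_le_one_of_le₀ (by linarith [p0 θ]) (ps θ).le⟩, ?_, ?_⟩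
  · intro x y hxy
    by_contra! hlt
    obtain ⟨m, hm1, hm2⟩ := exists_between hlt
    have hm0 : 0 < m := (div_nonneg (p1 y) (ps y).le).trans_lt hm1
    have hm1' : m < 1 := hm2.trans_le (div_le_one_of_le₀ (by linarith [p0 x]) (ps x).le)
    rw [div_lt_iff₀ (ps y)] at hm1
    rw [lt_div_iff₀ (ps x)] at hm2
    -- `-m e₀ + (1 - m) e₁` rises from `-m` to `1 - m`, yet is positive at `x`, negative at `y`
    have hh := hsc _ (hadd _ (hsmul _ he₀ (-m)) _ (hsmul _ he₁ (1 - m)))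
    rcases hh with h | h
    · have h1 := h hxy
      simp only [Pi.add_apply, Pi.smul_apply, smul_eq_mul] at h1
      rw [Real.sign_of_pos (by linarith), Real.sign_of_neg (by linarith)] at h1
      norm_num at h1
    · have h1 := h (hmin θmax)
      simp only [Pi.add_apply, Pi.smul_apply, smul_eq_mul, h00, h01, h10, h11] at h1
      rw [Real.sign_of_pos (by linarith), Real.sign_of_neg (by linarith)] at h1
      norm_num at h1
  · intro g hg θ
    -- `g` and its expansion in the dual basis agree at the extremes, hence everywhere
    have hz := (hsc _ (hadd _ hg _ (hadd _ (hsmul _ he₀ (-g θmin)) _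
      (hsmul _ he₁ (-g θmax))))).eq_zero (hmin θ) (hmax θ)
      (by simp [h00, h10]) (by simp [h01, h11])
    simp only [Pi.add_apply, Pi.smul_apply, smul_eq_mul] at hz
    have := (ps θ).ne'
    simp only [h00, h01, h10, h11]
    field_simp
    linear_combination hz

/-- Dichotomy according to whether evaluation at the two extremes is onto `ℝ²`. -/
lemma diffRep_of_singleCrossing {V : Set (Θ → ℝ)} {θmin θmax : Θ} (hmin : ∀ θ, θmin ≤ θ)
    (hmax : ∀ θ, θ ≤ θmax) (hsmul : ∀ f ∈ V, ∀ s : ℝ, s • f ∈ V)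
    (hadd : ∀ f ∈ V, ∀ g ∈ V, f + g ∈ V) (hsc : ∀ f ∈ V, SingleCrossing f) :
    DiffRep V θmin θmax := by
  by_cases hdet : ∃ f ∈ V, ∃ g ∈ V, f θmin * g θmax - f θmax * g θmin ≠ 0
  · obtain ⟨f, hf, g, hg, hD⟩ := hdet
    -- Cramer's rule
    refine diffRep_of_dual_basis hmin hmax hsmul hadd hsc
      (hsmul _ (hadd _ (hsmul _ hf (g θmax)) _ (hsmul _ hg (-f θmax)))
        (f θmin * g θmax - f θmax * g θmin)⁻¹)
      (hsmul _ (hadd _ (hsmul _ hf (-g θmin)) _ (hsmul _ hg (f θmin)))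
        (f θmin * g θmax - f θmax * g θmin)⁻¹) ?_ ?_ ?_ ?_ <;>
    simp only [Pi.add_apply, Pi.smul_apply, smul_eq_mul] <;> field_simp <;> ring
  · push Not at hdet
    by_cases h0 : ∃ f ∈ V, f ≠ 0
    · obtain ⟨f, hf, hne⟩ := h0
      refine diffRep_of_multiples hmin hmax (hsc f hf) fun g hg => ?_
      have hd := hdet f hf g hg
      have hz0 : ∀ θ, f θmin * g θ + -g θmin * f θ = 0 := fun θ =>
        (hsc _ (hadd _ (hsmul _ hg (f θmin)) _ (hsmul _ hf (-g θmin)))).eq_zero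
          (hmin θ) (hmax θ) (by simp only [Pi.add_apply, Pi.smul_apply, smul_eq_mul]; ring)
          (by simp only [Pi.add_apply, Pi.smul_apply, smul_eq_mul]; linarith)
      have hz1 : ∀ θ, f θmax * g θ + -g θmax * f θ = 0 := fun θ =>
        (hsc _ (hadd _ (hsmul _ hg (f θmax)) _ (hsmul _ hf (-g θmax)))).eq_zero
          (hmin θ) (hmax θ) (by simp only [Pi.add_apply, Pi.smul_apply, smul_eq_mul]; linarith)
          (by simp only [Pi.add_apply, Pi.smul_apply, smul_eq_mul]; ring)
      by_cases hfm : f θmin = 0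
      · by_cases hfM : f θmax = 0
        · exact absurd (funext fun θ => (hsc f hf).eq_zero (hmin θ) (hmax θ) hfm hfM) hne
        · refine ⟨g θmax / f θmax, funext fun θ => ?_⟩
          simp only [Pi.smul_apply, smul_eq_mul]
          field_simp
          linarith [hz1 θ]
      · refine ⟨g θmin / f θmin, funext fun θ => ?_⟩
        simp only [Pi.smul_apply, smul_eq_mul]
        field_simp
        linarith [hz0 θ]
    · push Not at h0
      exact diffRep_of_multiples (f := 0) hmin hmax (Or.inl fun _ _ _ => le_rfl)
        fun g hg => ⟨0, by simp [h0 g hg]⟩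

end

/-- When `Θ` has a minimum and a maximum, in a convex environment,
`u` has SCD iff it has a positive affine transformation that is a convex
combination of the extreme types' utilities with increasing weight. -/
theorem scd_iff_convex_comb_of_extremes {Θ A : Type*} [PartialOrder Θ]
    (hub : ∀ θ₁ θ₂ : Θ, ∃ θ : Θ, θ₁ ≤ θ ∧ θ₂ ≤ θ)
    (hlb : ∀ θ₁ θ₂ : Θ, ∃ θ : Θ, θ ≤ θ₁ ∧ θ ≤ θ₂)
    (θmin θmax : Θ) (hmin : ∀ θ : Θ, θmin ≤ θ) (hmax : ∀ θ : Θ, θ ≤ θmax)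
    (u : A → Θ → ℝ) (hconv : ConvexEnv u) :
    SCD u ↔
      ∃ (b c lam : Θ → ℝ),
        (∀ θ, 0 < b θ) ∧ (∀ θ, lam θ ∈ Set.Icc (0 : ℝ) 1) ∧ Monotone lam ∧
        (∀ (a : A) (θ : Θ),
          b θ * u a θ + c θ =
            lam θ * (b θmax * u a θmax + c θmax) +
              (1 - lam θ) * (b θmin * u a θmin + c θmin)) := by
  constructor
  · intro h
    obtain ⟨b, lam, hb, hlam, hmono, hrep⟩ := diffRep_of_singleCrossing (V := diffCone u) hmin hmax
      (fun f hf s => diffCone_smul hf s) (fun f hf g hg => diffCone_add hconv hf hg)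
      (fun f hf => diffCone_singleCrossing h hf)
    rcases isEmpty_or_nonempty A with hA | ⟨⟨a₀⟩⟩
    · exact ⟨b, 0, lam, hb, hlam, hmono, fun a => hA.elim a⟩
    · refine ⟨b, fun θ => -(b θ * u a₀ θ), lam, hb, hlam, hmono, fun a θ => ?_⟩
      have := hrep (u a - u a₀) ⟨1, a, a₀, zero_le_one, (one_smul _ _).symm⟩ θ
      simp only [Pi.sub_apply] at this
      linear_combination this
  · rintro ⟨b, c, lam, hb, -, hmono, hrep⟩ a a'
    set X := b θmax * (u a θmax - u a' θmax) with hX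
    set Y := b θmin * (u a θmin - u a' θmin) with hY
    have hs : ∀ θ, Real.sign (u a θ - u a' θ) = Real.sign (lam θ * (X - Y) + Y) := fun θ => by
      rw [← sign_mul_of_pos (hb θ)]
      congr 1
      rw [hX, hY]
      linear_combination hrep a θ - hrep a' θ
    rcases le_total Y X with hYX | hYX
    · left
      intro x y hxy
      simp only [hs]
      apply sign_mono
      nlinarith [hmono hxy]
    · right
      intro x y hxy
      simp only [hs]
      apply sign_mono
      nlinarith [hmono hxy]
end
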